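/- arXiv:2506.16378 — 2 statements merged into one kernel-verified Lean document; each statement's English description precedes it below -/
import Mathlib

section
/- Let n > 2m ≥ 2 and k₁ ≥ 0 be integers, and let ε > 0 and η > 0 be reals with η + k₁ + 1 > 2m. For x, y ∈ ℝⁿ define K(x,y) := ∫_{ℝⁿ} ∫_{ℝⁿ} ⟨z₁⟩^{-n−ε} ⟨z₂⟩^{-n−ε} · 𝟙_{\{|x−z₁| ≥ 1\}} |x−z₁|^{-(n−2m+k₁)} · ( ∫₀¹ λ^{η} ⟨λ|z₂−y|⟩^{-(2m−1−k₁)} ⟨λ(|x−z₁| − |z₂−y|)⟩^{-2} 𝟙_{\{|x−z₁|/2 ≤ |z₂−y| ≤ 2|x−z₁|\}} dλ ) dz₁ dz₂. Then K is admissible, i.e. sup_{x} ∫_{ℝⁿ} K(x,y) dy + sup_{y} ∫_{ℝⁿ} K(x,y) dx < ∞. -/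
open MeasureTheory ENNReal

/-!
Write `r = |x - z₁|`, `s = |z₂ - y|` and `a = 2m - 1 - k₁`, so that the power of `r` in the kernel
is `r ^ (a - (n - 1))`. Averaging against integrable weights in `z₁` and `z₂` preserves
admissibility by Tonelli and translation invariance, so only the dependence on `r` and `s` matters.

On the support of the kernel `r ≥ 1` and `s` is comparable to `r`, hence `λ / 2 ≤ ⟨λ s⟩ / r ≤ 3` for
`0 < λ < 1`, and `r ^ a ⟨λ s⟩ ^ (-a) = (⟨λ s⟩ / r) ^ (-a)` is at most `(λ / 2) ^ (-a) + 3 ^ (-a)`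
whatever the sign of `a`. The remaining `r ^ (-(n - 1))` is comparable to `max r s ^ (-(n - 1))`,
which leaves a kernel symmetric in `r` and `s`. In polar coordinates its power cancels the Jacobian,
and the radial integral of `⟨λ (r - s)⟩ ^ (-2)` is a multiple of `λ⁻¹`. What is left is
`∫₀¹ λ ^ (η - 1) (λ ^ (-a) + 1) dλ`, finite because `η > 0` and `η > a`.
-/

open Module Set
open scoped NNReal

section AdmissibleKernel

variable {X ι : Type*} [MeasurableSpace X] [MeasurableSpace ι] {μ : Measure X}

/-- Admissibility of a nonnegative kernel (the hypothesis of Schur's test): its integrals in either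
variable are bounded uniformly in the other one. -/
def IsAdmissibleKernel (μ : Measure X) (K : X → X → ℝ≥0∞) : Prop :=
  ∃ B : ℝ≥0, (∀ x, ∫⁻ y, K x y ∂μ ≤ B) ∧ ∀ y, ∫⁻ x, K x y ∂μ ≤ B

namespace IsAdmissibleKernel

lemma mono {K L : X → X → ℝ≥0∞} (hL : IsAdmissibleKernel μ L) (hKL : ∀ x y, K x y ≤ L x y) :
    IsAdmissibleKernel μ K := by
  obtain ⟨B, hrow, hcol⟩ := hL
  exact ⟨B, fun x ↦ (lintegral_mono (hKL x)).trans (hrow x),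
    fun y ↦ (lintegral_mono fun x ↦ hKL x y).trans (hcol y)⟩

lemma lintegral [SFinite μ] {ν : Measure ι} [SFinite ν] {K : ι → X → X → ℝ≥0∞} {f : ι → ℝ≥0∞}
    (hK : Measurable fun p : ι × X × X ↦ K p.1 p.2.1 p.2.2) (hf : ∫⁻ i, f i ∂ν ≠ ∞)
    (hrow : ∀ᵐ i ∂ν, ∀ x, ∫⁻ y, K i x y ∂μ ≤ f i)
    (hcol : ∀ᵐ i ∂ν, ∀ y, ∫⁻ x, K i x y ∂μ ≤ f i) :
    IsAdmissibleKernel μ fun x y ↦ ∫⁻ i, K i x y ∂ν := by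
  lift ∫⁻ i, f i ∂ν to ℝ≥0 using hf with B hB
  refine ⟨B, fun x ↦ ?_, fun y ↦ ?_⟩
  · have hKx : Measurable fun p : X × ι ↦ K p.2 x p.1 :=
      hK.comp (f := fun p : X × ι ↦ (p.2, x, p.1)) (by fun_prop)
    rw [lintegral_lintegral_swap hKx.aemeasurable, hB]
    exact lintegral_mono_ae (hrow.mono fun i hi ↦ hi x)
  · have hKy : Measurable fun p : X × ι ↦ K p.2 p.1 y :=
      hK.comp (f := fun p : X × ι ↦ (p.2, p.1, y)) (by fun_prop)
    rw [lintegral_lintegral_swap hKy.aemeasurable, hB]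
    exact lintegral_mono_ae (hcol.mono fun i hi ↦ hi y)

lemma lintegral_lintegral_translate {G : Type*} [AddCommGroup G] [MeasurableSpace G]
    [MeasurableAdd₂ G] [MeasurableNeg G] {μ : Measure G} [SFinite μ] [μ.IsAddLeftInvariant]
    [μ.IsNegInvariant] {k : G → G → ℝ≥0∞} (hk : IsAdmissibleKernel μ k)
    (hkm : Measurable (Function.uncurry k)) {w₁ w₂ : G → ℝ≥0∞} (hw₁ : Measurable w₁)
    (hw₂ : Measurable w₂) (hw₁_fin : ∫⁻ z, w₁ z ∂μ ≠ ∞) (hw₂_fin : ∫⁻ z, w₂ z ∂μ ≠ ∞) :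
    IsAdmissibleKernel μ fun x y ↦
      ∫⁻ z₁, ∫⁻ z₂, w₁ z₁ * w₂ z₂ * k (x - z₁) (z₂ - y) ∂μ ∂μ := by
  obtain ⟨B, hrow, hcol⟩ := hk
  have hmeas : Measurable fun p : (G × G) × G × G ↦
      w₁ p.1.1 * w₂ p.1.2 * k (p.2.1 - p.1.1) (p.1.2 - p.2.2) :=
    .mul (by fun_prop) (hkm.comp (f := fun p : (G × G) × G × G ↦
      (p.2.1 - p.1.1, p.1.2 - p.2.2)) (by fun_prop))
  have hmeas_z (x y : G) : Measurable fun z : G × G ↦ w₁ z.1 * w₂ z.2 * k (x - z.1) (z.2 - y) :=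
    hmeas.comp (f := fun z ↦ (z, x, y)) (by fun_prop)
  have hfin : ∫⁻ z : G × G, w₁ z.1 * w₂ z.2 * B ∂μ.prod μ ≠ ∞ := by
    rw [lintegral_mul_const _ (by fun_prop),
      lintegral_prod_mul hw₁.aemeasurable hw₂.aemeasurable]
    finiteness
  refine (lintegral hmeas hfin (ae_of_all _ fun z x ↦ ?_) (ae_of_all _ fun z y ↦ ?_)).mono
    fun x y ↦ (lintegral_lintegral (hmeas_z x y).aemeasurable).le
  · rw [lintegral_const_mul _ (by fun_prop),
      lintegral_sub_left_eq_self (fun v ↦ k (x - z.1) v) z.2]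
    gcongr
    exact hrow _
  · rw [lintegral_const_mul _ (by fun_prop),
      lintegral_sub_right_eq_self (fun u ↦ k u (z.2 - y)) z.1]
    gcongr
    exact hcol _

end IsAdmissibleKernel

end AdmissibleKernel

lemma lintegral_comp_mul_sub {φ : ℝ → ℝ≥0∞} (hφ : Measurable φ) {c : ℝ} (hc : c ≠ 0) (t : ℝ) :
    ∫⁻ ρ, φ (c * (ρ - t)) = ENNReal.ofReal |c⁻¹| * ∫⁻ ρ, φ ρ := by
  rw [lintegral_sub_right_eq_self (fun ρ ↦ φ (c * ρ)), ← lintegral_map hφ (measurable_const_mul c),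
    Real.map_volume_mul_left hc, lintegral_smul_measure, smul_eq_mul]

section PolarCoordinates

variable {E : Type*} [NormedAddCommGroup E] [NormedSpace ℝ E] [FiniteDimensional ℝ E]
  [MeasurableSpace E] [BorelSpace E] (μ : Measure E) [μ.IsAddHaarMeasure]

lemma lintegral_comp_norm_addHaar [Nontrivial E] {φ : ℝ → ℝ≥0∞} (hφ : Measurable φ) :
    ∫⁻ u, φ ‖u‖ ∂μ = finrank ℝ E * μ (Metric.ball 0 1) *
      ∫⁻ ρ in Ioi (0 : ℝ), ENNReal.ofReal (ρ ^ (finrank ℝ E - 1)) * φ ρ := by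
  have hφ' : Measurable fun ρ : Ioi (0 : ℝ) ↦ φ ρ := hφ.comp measurable_subtype_coe
  calc ∫⁻ u, φ ‖u‖ ∂μ = ∫⁻ u : ({0}ᶜ : Set E), φ ‖u.1‖ ∂μ.comap (↑) := by
        rw [lintegral_subtype_comap (measurableSet_singleton _).compl fun u ↦ φ ‖u‖,
          restrict_compl_singleton]
    _ = ∫⁻ p, φ p.2 ∂μ.toSphere.prod (.volumeIoiPow (finrank ℝ E - 1)) := by
        rw [← μ.measurePreserving_homeomorphUnitSphereProd.lintegral_comp
          (f := fun p ↦ φ p.2) (by fun_prop)]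
        simp
    _ = μ.toSphere univ * ∫⁻ ρ : Ioi (0 : ℝ), φ ρ ∂.volumeIoiPow (finrank ℝ E - 1) := by
        simpa using lintegral_prod_mul (μ := μ.toSphere) (f := 1) aemeasurable_one hφ'.aemeasurable
    _ = _ := by
        rw [μ.toSphere_apply_univ, Measure.volumeIoiPow,
          lintegral_withDensity_eq_lintegral_mul _ (by fun_prop) hφ']
        congr 1
        exact lintegral_subtype_comap measurableSet_Ioi
          fun ρ ↦ ENNReal.ofReal (ρ ^ (finrank ℝ E - 1)) * φ ρ

lemma lintegral_inv_norm_pow_mul_comp_norm [Nontrivial E] {φ : ℝ → ℝ≥0∞} (hφ : Measurable φ) :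
    ∫⁻ u, ENNReal.ofReal (‖u‖ ^ (finrank ℝ E - 1))⁻¹ * φ ‖u‖ ∂μ =
      finrank ℝ E * μ (Metric.ball 0 1) * ∫⁻ ρ in Ioi (0 : ℝ), φ ρ := by
  rw [lintegral_comp_norm_addHaar μ
    (φ := fun ρ ↦ ENNReal.ofReal (ρ ^ (finrank ℝ E - 1))⁻¹ * φ ρ) (by fun_prop)]
  congr 1
  refine setLIntegral_congr_fun measurableSet_Ioi fun ρ (hρ : 0 < ρ) ↦ ?_
  rw [← mul_assoc, ← ENNReal.ofReal_mul (by positivity), mul_inv_cancel₀ (by positivity),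
    ENNReal.ofReal_one, one_mul]

end PolarCoordinates

section JapaneseBracket

/-- The bracket `⟨t⟩ = (1 + t²)^{1/2}` of a real number; the bracket of a vector `z` is
`japaneseBracket ‖z‖`. -/
noncomputable def japaneseBracket (t : ℝ) : ℝ := √(1 + t ^ 2)

lemma japaneseBracket_pos (t : ℝ) : 0 < japaneseBracket t := by
  unfold japaneseBracket; positivity

lemma abs_le_japaneseBracket (t : ℝ) : |t| ≤ japaneseBracket t :=
  Real.abs_le_sqrt (by linarith)

lemma japaneseBracket_le_one_add_abs (t : ℝ) : japaneseBracket t ≤ 1 + |t| := by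
  simpa [japaneseBracket] using sqrt_one_add_norm_sq_le t

@[fun_prop]
lemma measurable_japaneseBracket : Measurable japaneseBracket := by
  unfold japaneseBracket; fun_prop

lemma japaneseBracket_neg (t : ℝ) : japaneseBracket (-t) = japaneseBracket t := by
  simp [japaneseBracket]

lemma lintegral_japaneseBracket_norm_rpow_neg_ne_top {E : Type*} [NormedAddCommGroup E]
    [NormedSpace ℝ E] [FiniteDimensional ℝ E] [MeasurableSpace E] [BorelSpace E] (μ : Measure E)
    [μ.IsAddHaarMeasure] {b : ℝ} (hb : finrank ℝ E < b) :
    ∫⁻ z, ENNReal.ofReal (japaneseBracket ‖z‖ ^ (-b)) ∂μ ≠ ∞ := by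
  convert (integrable_rpow_neg_one_add_norm_sq (μ := μ) hb).lintegral_lt_top.ne using 4 with z
  rw [japaneseBracket, Real.rpow_div_two_eq_sqrt _ (by positivity)]

lemma lintegral_japaneseBracket_rpow_neg_ne_top {b : ℝ} (hb : 1 < b) :
    ∫⁻ t, ENNReal.ofReal (japaneseBracket t ^ (-b)) ≠ ∞ := by
  simpa [japaneseBracket] using
    lintegral_japaneseBracket_norm_rpow_neg_ne_top (volume : Measure ℝ) (b := b) (by simpa)

lemma japaneseBracket_div_mem_Icc {r s lam : ℝ} (hr : 1 ≤ r) (hrs : r / 2 ≤ s) (hsr : s ≤ 2 * r)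
    (hlam₀ : 0 ≤ lam) (hlam₁ : lam ≤ 1) :
    japaneseBracket (lam * s) / r ∈ Icc (lam / 2) 3 := by
  have habs : |lam * s| = lam * s := abs_of_nonneg (mul_nonneg hlam₀ (by linarith))
  have hlower := habs ▸ abs_le_japaneseBracket (lam * s)
  have hupper := habs ▸ japaneseBracket_le_one_add_abs (lam * s)
  rw [mem_Icc, le_div_iff₀ (by linarith), div_le_iff₀ (by linarith)]
  constructor <;> nlinarith

lemma rpow_le_rpow_add_rpow_of_mem_Icc {p q x : ℝ} (hp : 0 < p) (hx : x ∈ Icc p q) (c : ℝ) :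
    x ^ c ≤ p ^ c + q ^ c := by
  have hx₀ : 0 < x := hp.trans_le hx.1
  have hq₀ : 0 < q := hx₀.trans_le hx.2
  rcases le_total c 0 with hc | hc
  · exact (Real.rpow_le_rpow_of_nonpos hp hx.1 hc).trans (le_add_of_nonneg_right (by positivity))
  · exact (Real.rpow_le_rpow hx₀.le hx.2 hc).trans (le_add_of_nonneg_left (by positivity))

lemma rpow_mul_japaneseBracket_rpow_neg_le {r s lam : ℝ} (hr : 1 ≤ r) (hrs : r / 2 ≤ s)
    (hsr : s ≤ 2 * r) (hlam₀ : 0 < lam) (hlam₁ : lam ≤ 1) (a : ℝ) :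
    r ^ a * japaneseBracket (lam * s) ^ (-a) ≤ (lam / 2) ^ (-a) + 3 ^ (-a) := by
  have hr₀ : 0 ≤ r := by linarith
  calc r ^ a * japaneseBracket (lam * s) ^ (-a)
      = (japaneseBracket (lam * s) / r) ^ (-a) := by
        rw [Real.div_rpow (japaneseBracket_pos _).le hr₀, Real.rpow_neg hr₀, div_inv_eq_mul,
          mul_comm]
    _ ≤ (lam / 2) ^ (-a) + 3 ^ (-a) :=
        rpow_le_rpow_add_rpow_of_mem_Icc (by positivity)
          (japaneseBracket_div_mem_Icc hr hrs hsr hlam₀.le hlam₁) _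

end JapaneseBracket

section RadialKernel

/-- The kernel of the theorem as a function of the radii `r = |x - z₁|` and `s = |z₂ - y|`, without
the weights in `z₁` and `z₂`. In dimension `n` one takes `k = n - 1`; the exponents `a` and `b` are
`2m - 1 - k₁` and `2` in the theorem. -/
noncomputable def radialKernel (k : ℕ) (a b η r s : ℝ) : ℝ≥0∞ :=
  (if 1 ≤ r then 1 else 0) * ENNReal.ofReal (r ^ (a - k)) *
    ∫⁻ lam in Ioo (0 : ℝ) 1,
      ENNReal.ofReal (lam ^ η * japaneseBracket (lam * s) ^ (-a) *
        japaneseBracket (lam * (r - s)) ^ (-b)) *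
      (if r / 2 ≤ s ∧ s ≤ 2 * r then 1 else 0)

/-- Bound for `lam ^ η * (⟨lam * s⟩ / r) ^ (-a)` on the support of `radialKernel`. -/
noncomputable def spectralWeight (a η lam : ℝ) : ℝ :=
  lam ^ η * ((lam / 2) ^ (-a) + 3 ^ (-a))

/-- The part of the majorant of `radialKernel` that depends on the radii. The maximum makes it
symmetric in `r` and `s`, and since it is halved, `r ^ (-k)` is still dominated when `s ≤ 2 * r`. -/
noncomputable def shellKernel (k : ℕ) (b lam r s : ℝ) : ℝ≥0∞ :=
  ENNReal.ofReal (((max r s / 2) ^ k)⁻¹ * japaneseBracket (lam * (r - s)) ^ (-b))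

/-- A majorant of `radialKernel`, obtained by bounding the integrand for each spectral parameter. -/
noncomputable def radialMajorant (k : ℕ) (a b η r s : ℝ) : ℝ≥0∞ :=
  ∫⁻ lam in Ioo (0 : ℝ) 1, ENNReal.ofReal (spectralWeight a η lam) * shellKernel k b lam r s

lemma shellKernel_comm (k : ℕ) (b lam r s : ℝ) :
    shellKernel k b lam r s = shellKernel k b lam s r := by
  rw [shellKernel, shellKernel, max_comm, ← japaneseBracket_neg, ← mul_neg, neg_sub]

lemma shellKernel_le (k : ℕ) (b lam : ℝ) {r : ℝ} (s : ℝ) (hr : 0 < r) :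
    shellKernel k b lam r s ≤ ENNReal.ofReal (2 ^ k) *
      (ENNReal.ofReal (r ^ k)⁻¹ * ENNReal.ofReal (japaneseBracket (lam * (r - s)) ^ (-b))) := by
  have hdiff := japaneseBracket_pos (lam * (r - s))
  rw [← ENNReal.ofReal_mul (by positivity), ← ENNReal.ofReal_mul (by positivity), ← mul_assoc]
  refine ENNReal.ofReal_le_ofReal (mul_le_mul_of_nonneg_right ?_ (by positivity))
  calc ((max r s / 2) ^ k)⁻¹ ≤ ((r / 2) ^ k)⁻¹ := by gcongr; exact le_max_left r s
    _ = 2 ^ k * (r ^ k)⁻¹ := by rw [div_pow, inv_div, div_eq_mul_inv]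

@[fun_prop]
lemma measurable_shellKernel (k : ℕ) (b : ℝ) :
    Measurable fun p : ℝ × ℝ × ℝ ↦ shellKernel k b p.1 p.2.1 p.2.2 := by
  unfold shellKernel; fun_prop

@[fun_prop]
lemma measurable_spectralWeight (a η : ℝ) : Measurable (spectralWeight a η) := by
  unfold spectralWeight; fun_prop

@[fun_prop]
lemma measurable_radialMajorant (k : ℕ) (a b η : ℝ) :
    Measurable fun p : ℝ × ℝ ↦ radialMajorant k a b η p.1 p.2 :=
  .lintegral_prod_right' (f := fun q : (ℝ × ℝ) × ℝ ↦
    ENNReal.ofReal (spectralWeight a η q.2) * shellKernel k b q.2 q.1.1 q.1.2) (by fun_prop)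

lemma spectralWeight_nonneg (a η : ℝ) {lam : ℝ} (hlam : 0 ≤ lam) : 0 ≤ spectralWeight a η lam := by
  unfold spectralWeight; positivity

lemma lintegral_spectralWeight_mul_inv_ne_top {a η : ℝ} (hη : 0 < η) (ha : a < η) :
    ∫⁻ lam in Ioo (0 : ℝ) 1, ENNReal.ofReal (spectralWeight a η lam * lam⁻¹) ≠ ∞ := by
  have hpow {c : ℝ} (hc : 0 < c) : IntegrableOn (fun lam : ℝ ↦ lam ^ (c - 1)) (Ioo 0 1) :=
    (intervalIntegral.integrableOn_Ioo_rpow_iff one_pos).2 (by linarith)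
  have hsplit : EqOn
      (fun lam ↦ 2 ^ a * lam ^ (η - a - 1) + 3 ^ (-a) * lam ^ (η - 1))
      (fun lam ↦ spectralWeight a η lam * lam⁻¹) (Ioo 0 1) := by
    intro lam hlam
    have hlam₀ : 0 < lam := hlam.1
    simp only [spectralWeight]
    rw [Real.rpow_sub_one hlam₀.ne', Real.rpow_sub_one hlam₀.ne', Real.rpow_sub hlam₀,
      Real.div_rpow hlam₀.le zero_le_two, Real.rpow_neg hlam₀.le, Real.rpow_neg zero_le_two]
    field_simp
  have hint : IntegrableOn (fun lam ↦ spectralWeight a η lam * lam⁻¹) (Ioo 0 1) :=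
    IntegrableOn.congr_fun (((hpow (sub_pos.2 ha)).const_mul _).add ((hpow hη).const_mul _))
      hsplit measurableSet_Ioo
  exact hint.lintegral_lt_top.ne

lemma radial_integrand_le (k : ℕ) (a b η : ℝ) {r s lam : ℝ} (hr : 1 ≤ r) (hrs : r / 2 ≤ s)
    (hsr : s ≤ 2 * r) (hlam₀ : 0 < lam) (hlam₁ : lam ≤ 1) :
    r ^ (a - k) * (lam ^ η * japaneseBracket (lam * s) ^ (-a) *
        japaneseBracket (lam * (r - s)) ^ (-b)) ≤
      spectralWeight a η lam *
        (((max r s / 2) ^ k)⁻¹ * japaneseBracket (lam * (r - s)) ^ (-b)) := by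
  have hr₀ : 0 < r := by linarith
  have hmax : max r s / 2 ≤ r := by
    rw [div_le_iff₀ two_pos, max_le_iff]; constructor <;> linarith
  have hdiff := japaneseBracket_pos (lam * (r - s))
  calc r ^ (a - k) * (lam ^ η * japaneseBracket (lam * s) ^ (-a) *
        japaneseBracket (lam * (r - s)) ^ (-b))
      = lam ^ η * (r ^ a * japaneseBracket (lam * s) ^ (-a)) *
          ((r ^ k)⁻¹ * japaneseBracket (lam * (r - s)) ^ (-b)) := by
        rw [Real.rpow_sub_natCast hr₀.ne']; ring
    _ ≤ lam ^ η * ((lam / 2) ^ (-a) + 3 ^ (-a)) *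
          (((max r s / 2) ^ k)⁻¹ * japaneseBracket (lam * (r - s)) ^ (-b)) := by
        gcongr
        exact rpow_mul_japaneseBracket_rpow_neg_le hr hrs hsr hlam₀ hlam₁ a

lemma radialKernel_le_radialMajorant (k : ℕ) (a b η r s : ℝ) :
    radialKernel k a b η r s ≤ radialMajorant k a b η r s := by
  unfold radialKernel radialMajorant shellKernel
  by_cases hr : 1 ≤ r
  swap
  · simp [hr]
  by_cases hs : r / 2 ≤ s ∧ s ≤ 2 * r
  swap
  · simp [hs]
  simp only [if_pos hr, if_pos hs, one_mul, mul_one]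
  rw [← lintegral_const_mul' _ _ ENNReal.ofReal_ne_top]
  refine setLIntegral_mono' measurableSet_Ioo fun lam hlam ↦ ?_
  rw [← ENNReal.ofReal_mul (by positivity),
    ← ENNReal.ofReal_mul (spectralWeight_nonneg a η hlam.1.le)]
  exact ENNReal.ofReal_le_ofReal (radial_integrand_le k a b η hr hs.1 hs.2 hlam.1 hlam.2.le)

end RadialKernel

section HaarMeasure

variable {E : Type*} [NormedAddCommGroup E] [NormedSpace ℝ E] [FiniteDimensional ℝ E]
  [MeasurableSpace E] [BorelSpace E] [Nontrivial E] (μ : Measure E) [μ.IsAddHaarMeasure]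

lemma exists_lintegral_shellKernel_norm_le {b : ℝ} (hb : 1 < b) :
    ∃ C : ℝ≥0, ∀ lam, 0 < lam → ∀ t,
      ∫⁻ u, shellKernel (finrank ℝ E - 1) b lam ‖u‖ t ∂μ ≤ C * ENNReal.ofReal lam⁻¹ := by
  set k := finrank ℝ E - 1
  set decay : ℝ → ℝ≥0∞ := fun ρ ↦ ENNReal.ofReal (japaneseBracket ρ ^ (-b))
  have hdecay : Measurable decay := by fun_prop
  set c : ℝ≥0∞ := finrank ℝ E * μ (Metric.ball 0 1)
  have hC : ENNReal.ofReal (2 ^ k) * (c * ∫⁻ ρ, decay ρ) ≠ ∞ := by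
    have := lintegral_japaneseBracket_rpow_neg_ne_top hb
    have := measure_ball_ne_top (μ := μ) (x := 0) (r := 1)
    finiteness
  lift ENNReal.ofReal (2 ^ k) * (c * ∫⁻ ρ, decay ρ) to ℝ≥0 using hC with C hC_eq
  refine ⟨C, fun lam hlam t ↦ ?_⟩
  have hpointwise : ∀ᵐ u ∂μ, shellKernel k b lam ‖u‖ t ≤
      ENNReal.ofReal (2 ^ k) * (ENNReal.ofReal (‖u‖ ^ k)⁻¹ * decay (lam * (‖u‖ - t))) := by
    filter_upwards [Measure.ae_ne μ 0] with u hu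
    exact shellKernel_le k b lam t (norm_pos_iff.2 hu)
  have hradial : ∫⁻ ρ in Ioi (0 : ℝ), decay (lam * (ρ - t)) ≤
      ENNReal.ofReal lam⁻¹ * ∫⁻ ρ, decay ρ := by
    rw [← abs_of_pos (inv_pos.2 hlam), ← lintegral_comp_mul_sub hdecay hlam.ne' t]
    exact setLIntegral_le_lintegral _ _
  calc ∫⁻ u, shellKernel k b lam ‖u‖ t ∂μ
      ≤ ∫⁻ u, ENNReal.ofReal (2 ^ k) *
          (ENNReal.ofReal (‖u‖ ^ k)⁻¹ * decay (lam * (‖u‖ - t))) ∂μ := lintegral_mono_ae hpointwise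
    _ = ENNReal.ofReal (2 ^ k) * (c * ∫⁻ ρ in Ioi (0 : ℝ), decay (lam * (ρ - t))) := by
        rw [lintegral_const_mul' _ _ ENNReal.ofReal_ne_top,
          lintegral_inv_norm_pow_mul_comp_norm μ (φ := fun ρ ↦ decay (lam * (ρ - t)))
            (by fun_prop)]
    _ ≤ ENNReal.ofReal (2 ^ k) * (c * (ENNReal.ofReal lam⁻¹ * ∫⁻ ρ, decay ρ)) := by gcongr
    _ = C * ENNReal.ofReal lam⁻¹ := by rw [hC_eq]; ring

lemma isAdmissibleKernel_radialMajorant {a b η : ℝ} (hη : 0 < η) (ha : a < η)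
    (hb : 1 < b) :
    IsAdmissibleKernel μ fun u v : E ↦ radialMajorant (finrank ℝ E - 1) a b η ‖u‖ ‖v‖ := by
  obtain ⟨C, hC⟩ := exists_lintegral_shellKernel_norm_le μ hb
  have hfin : ∫⁻ lam in Ioo (0 : ℝ) 1, C * ENNReal.ofReal (spectralWeight a η lam * lam⁻¹) ≠ ∞ := by
    rw [lintegral_const_mul' _ _ coe_ne_top]
    exact mul_ne_top coe_ne_top (lintegral_spectralWeight_mul_inv_ne_top hη ha)
  have hcol (lam : ℝ) (hlam : lam ∈ Ioo (0 : ℝ) 1) (t : ℝ) :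
      ∫⁻ u, ENNReal.ofReal (spectralWeight a η lam) *
        shellKernel (finrank ℝ E - 1) b lam ‖u‖ t ∂μ ≤
      C * ENNReal.ofReal (spectralWeight a η lam * lam⁻¹) := by
    rw [lintegral_const_mul' _ _ ofReal_ne_top,
      ENNReal.ofReal_mul (spectralWeight_nonneg a η hlam.1.le), mul_left_comm]
    gcongr
    exact hC lam hlam.1 t
  refine .lintegral (by fun_prop) hfin
    (ae_restrict_of_forall_mem measurableSet_Ioo fun lam hlam u ↦ ?_)
    (ae_restrict_of_forall_mem measurableSet_Ioo fun lam hlam v ↦ hcol lam hlam ‖v‖)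
  simp only [shellKernel_comm _ b lam ‖u‖]
  exact hcol lam hlam ‖u‖

theorem stmt_15_general {a b η : ℝ} (hη : 0 < η) (ha : a < η) (hb : 1 < b) {w₁ w₂ : E → ℝ≥0∞}
    (hw₁ : Measurable w₁) (hw₂ : Measurable w₂) (hw₁_fin : ∫⁻ z, w₁ z ∂μ ≠ ∞)
    (hw₂_fin : ∫⁻ z, w₂ z ∂μ ≠ ∞) :
    IsAdmissibleKernel μ fun x y ↦ ∫⁻ z₁, ∫⁻ z₂, w₁ z₁ * w₂ z₂ *
      radialKernel (finrank ℝ E - 1) a b η ‖x - z₁‖ ‖z₂ - y‖ ∂μ ∂μ := by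
  refine ((isAdmissibleKernel_radialMajorant μ hη ha hb).lintegral_lintegral_translate
    (by fun_prop) hw₁ hw₂ hw₁_fin hw₂_fin).mono fun x y ↦ ?_
  gcongr
  exact radialKernel_le_radialMajorant ..

end HaarMeasure

/-- Admissibility of the kernel arising in the regime `r₁ ≈ r₂ ≫ 1`. -/
theorem stmt_15 (n m k₁ : ℕ) (hm : 1 ≤ m) (hn : 2 * m < n) (ε η : ℝ)
    (hε : 0 < ε) (hη : 0 < η) (hcond : 2 * (m : ℝ) < η + k₁ + 1)
    (K : EuclideanSpace ℝ (Fin n) → EuclideanSpace ℝ (Fin n) → ℝ≥0∞)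
    (hK : ∀ x y, K x y =
      ∫⁻ z₁, ∫⁻ z₂,
        ENNReal.ofReal (Real.sqrt (1 + ‖z₁‖ ^ 2) ^ (-(n : ℝ) - ε)) *
        ENNReal.ofReal (Real.sqrt (1 + ‖z₂‖ ^ 2) ^ (-(n : ℝ) - ε)) *
        (if 1 ≤ ‖x - z₁‖ then 1 else 0) *
        ENNReal.ofReal (‖x - z₁‖ ^ (-((n : ℝ) - 2 * m + k₁))) *
        ∫⁻ lam in Set.Ioo (0 : ℝ) 1,
          ENNReal.ofReal (lam ^ η *
            Real.sqrt (1 + (lam * ‖z₂ - y‖) ^ 2) ^ (-(2 * (m : ℝ) - 1 - k₁)) *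
            Real.sqrt (1 + (lam * (‖x - z₁‖ - ‖z₂ - y‖)) ^ 2) ^ (-(2 : ℝ))) *
          (if ‖x - z₁‖ / 2 ≤ ‖z₂ - y‖ ∧ ‖z₂ - y‖ ≤ 2 * ‖x - z₁‖ then 1 else 0)) :
    ∃ B : ℝ, (∀ x, ∫⁻ y, K x y ≤ ENNReal.ofReal B) ∧
      (∀ y, ∫⁻ x, K x y ≤ ENNReal.ofReal B) := by
  have : Nontrivial (EuclideanSpace ℝ (Fin n)) :=
    nontrivial_of_finrank_pos (R := ℝ) (by rw [finrank_euclideanSpace_fin]; omega)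
  let weight (z : EuclideanSpace ℝ (Fin n)) := ENNReal.ofReal (japaneseBracket ‖z‖ ^ (-(n : ℝ) - ε))
  have hweight : ∫⁻ z, weight z ≠ ∞ := by
    simp only [weight, ← neg_add']
    exact lintegral_japaneseBracket_norm_rpow_neg_ne_top volume (by simpa)
  have hexponent : -((n : ℝ) - 2 * m + k₁) = 2 * m - 1 - k₁ - (n - 1 : ℕ) := by
    rw [Nat.cast_pred (by omega)]; ring
  obtain ⟨B, hB⟩ := stmt_15_general volume hη (a := 2 * m - 1 - k₁) (by linarith) one_lt_two
    (w₁ := weight) (w₂ := weight) (by fun_prop) (by fun_prop) hweight hweight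
  refine ⟨B, ?_⟩
  simpa only [hK, weight, hexponent, radialKernel, japaneseBracket, finrank_euclideanSpace_fin,
    ofReal_coe_nnreal, mul_assoc] using hB
end

section
/- Let n > 2m ≥ 2 and k₁ ≥ 0 be integers, and let ε > 0 and η be reals with η + k₁ + 1 > 2m and 0 < η + 1 < n. For x, y ∈ ℝⁿ define K(x,y) := ∫_{ℝⁿ} ∫_{ℝⁿ} ⟨z₁⟩^{-n−ε} ⟨z₂⟩^{-n−ε} · 𝟙_{\{|z₂−y| ≥ 2|x−z₁|, |x−z₁| ≥ 1\}} · |x−z₁|^{-(n−2m+k₁)} |z₂−y|^{-η−1} dz₁ dz₂. Then for every p with 1 ≤ p < n/(n−η−1), the integral operator f ↦ ∫_{ℝⁿ} K(·,y) f(y) dy is bounded on L^p(ℝⁿ). -/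
/-!
Where `t = |x - z₁| ≥ 1` and `u = |z₂ - y| ≥ κ t`, a factor `(t / u) ^ σ ≤ κ ^ (-σ)` can be split
off for any `σ ≥ 0`: decay in `u` is traded for decay in `t`, so that
`t ^ (-a) * u ^ (-b)` is at most a constant times `(1 + t) ^ (-(a + σ)) * (1 + u) ^ (-(b - σ))`.
The cut-off coupling `z₁` and `z₂` is then no longer needed, and the kernel is dominated by a
rank-one kernel `G x * H y`, with `G` and `H` convolutions of an integrable weight with a power.
By Young and Hölder it remains to have `G ∈ L^p` and `H ∈ L^{p'}`, that is `d / p < a + σ` and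
`d / p' < b - σ` in dimension `d`; such a `σ ≥ 0` exists exactly when `d < a + b` and `d / p' < b`.
-/

open MeasureTheory ENNReal

section Measure

variable {α β : Type*} [MeasurableSpace α] [MeasurableSpace β] {μ : Measure α} {ν : Measure β}

lemma eLpNorm_ofReal_eq_lintegral_rpow (f : α → ℝ≥0∞) {p : ℝ} (hp : 0 < p) :
    eLpNorm f (ENNReal.ofReal p) μ = (∫⁻ x, f x ^ p ∂μ) ^ (1 / p) := by
  rw [eLpNorm_eq_lintegral_rpow_enorm_toReal (by simpa using hp) ofReal_ne_top,
    toReal_ofReal hp.le]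
  simp only [enorm_eq_self]

lemma eLpNorm_const_mul_ennreal (c : ℝ≥0∞) {f : α → ℝ≥0∞} (hf : AEMeasurable f μ) {p : ℝ≥0∞}
    (hp : p ≠ 0) : eLpNorm (fun x ↦ c * f x) p μ = c * eLpNorm f p μ := by
  rcases eq_or_ne p ⊤ with rfl | hp_top
  · simpa only [eLpNorm_exponent_top, eLpNormEssSup, enorm_eq_self] using essSup_const_mul
  · have hp_pos : 0 < p.toReal := toReal_pos hp hp_top
    simp only [eLpNorm_eq_lintegral_rpow_enorm_toReal hp hp_top, enorm_eq_self,
      mul_rpow_of_nonneg _ _ hp_pos.le]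
    rw [lintegral_const_mul'' _ (hf.pow_const _), mul_rpow_of_nonneg _ _ (by positivity),
      ← ENNReal.rpow_mul, mul_one_div_cancel hp_pos.ne', ENNReal.rpow_one]

lemma lintegral_mul_le_lintegral_mul_eLpNorm_top (f g : α → ℝ≥0∞) (hf : AEMeasurable f μ) :
    ∫⁻ x, f x * g x ∂μ ≤ (∫⁻ x, f x ∂μ) * eLpNorm g ⊤ μ := by
  rw [← lintegral_mul_const'' _ hf, eLpNorm_exponent_top]
  refine lintegral_mono_ae ?_
  filter_upwards [enorm_ae_le_eLpNormEssSup g μ] with x hx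
  gcongr
  simpa only [enorm_eq_self] using hx

lemma lintegral_mul_le_eLpNorm_mul_eLpNorm {p q : ℝ≥0∞} (hpq : p.HolderConjugate q)
    {f g : α → ℝ≥0∞} (hf : AEMeasurable f μ) (hg : AEMeasurable g μ) :
    ∫⁻ x, f x * g x ∂μ ≤ eLpNorm f p μ * eLpNorm g q μ := by
  rcases eq_or_ne p ⊤ with rfl | hp
  · obtain rfl := HolderConjugate.unique ⊤ q 1
    simpa only [eLpNorm_one_eq_lintegral_enorm, enorm_eq_self, mul_comm] using
      lintegral_mul_le_lintegral_mul_eLpNorm_top g f hg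
  rcases eq_or_ne q ⊤ with rfl | hq
  · obtain rfl := hpq.symm.unique ⊤ p 1
    simpa only [eLpNorm_one_eq_lintegral_enorm, enorm_eq_self] using
      lintegral_mul_le_lintegral_mul_eLpNorm_top f g hf
  have hpq' : p.toReal.HolderConjugate q.toReal := HolderConjugate.toReal_of_ne_top hp hq
  simpa only [eLpNorm_eq_lintegral_rpow_enorm_toReal (HolderConjugate.ne_zero p q) hp,
    eLpNorm_eq_lintegral_rpow_enorm_toReal (HolderConjugate.ne_zero q p) hq, enorm_eq_self,
    Pi.mul_apply] using lintegral_mul_le_Lp_mul_Lq μ hpq' hf hg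

lemma eLpNorm_lintegral_mul_le_of_le_mul {p q : ℝ≥0∞} (hpq : p.HolderConjugate q)
    {K : α → β → ℝ≥0∞} {G : α → ℝ≥0∞} {H f : β → ℝ≥0∞} (hK : ∀ x y, K x y ≤ G x * H y)
    (hG : AEMeasurable G μ) (hH : AEMeasurable H ν) (hf : AEMeasurable f ν) :
    eLpNorm (fun x ↦ ∫⁻ y, K x y * f y ∂ν) p μ ≤
      eLpNorm G p μ * eLpNorm H q ν * eLpNorm f p ν := by
  have pointwise (x : α) : ∫⁻ y, K x y * f y ∂ν ≤ (eLpNorm H q ν * eLpNorm f p ν) * G x :=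
    calc ∫⁻ y, K x y * f y ∂ν
        ≤ ∫⁻ y, G x * (H y * f y) ∂ν := by
          simp only [← mul_assoc]
          gcongr with y
          exact hK x y
      _ = G x * ∫⁻ y, H y * f y ∂ν := lintegral_const_mul'' _ (hH.mul hf)
      _ ≤ G x * (eLpNorm H q ν * eLpNorm f p ν) := by
          gcongr
          exact lintegral_mul_le_eLpNorm_mul_eLpNorm hpq.symm hH hf
      _ = _ := mul_comm _ _
  calc eLpNorm (fun x ↦ ∫⁻ y, K x y * f y ∂ν) p μ
      ≤ eLpNorm (fun x ↦ (eLpNorm H q ν * eLpNorm f p ν) * G x) p μ :=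
        eLpNorm_mono_enorm pointwise
    _ = (eLpNorm H q ν * eLpNorm f p ν) * eLpNorm G p μ :=
        eLpNorm_const_mul_ennreal _ hG (HolderConjugate.ne_zero p q)
    _ = _ := by ring

lemma lintegral_mul_rpow_le {w g : α → ℝ≥0∞} (hw : AEMeasurable w μ) (hg : AEMeasurable g μ)
    {q : ℝ} (hq : 1 ≤ q) :
    (∫⁻ x, w x * g x ∂μ) ^ q ≤ (∫⁻ x, w x ∂μ) ^ (q - 1) * ∫⁻ x, w x * g x ^ q ∂μ := by
  have hq_pos : 0 < q := by linarith
  have jensen := eLpNorm'_le_eLpNorm'_mul_rpow_measure_univ (f := g) one_pos hq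
    (hg.mono_ac (withDensity_absolutelyContinuous μ w)).aestronglyMeasurable
  simp only [eLpNorm', enorm_eq_self, ENNReal.rpow_one, div_one,
    lintegral_withDensity_eq_lintegral_mul₀ hw hg,
    lintegral_withDensity_eq_lintegral_mul₀ hw (hg.pow_const q), Pi.mul_apply,
    withDensity_apply _ MeasurableSet.univ, Measure.restrict_univ] at jensen
  calc (∫⁻ x, w x * g x ∂μ) ^ q
      ≤ ((∫⁻ x, w x * g x ^ q ∂μ) ^ (1 / q) * (∫⁻ x, w x ∂μ) ^ (1 - 1 / q)) ^ q := by gcongr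
    _ = (∫⁻ x, w x ∂μ) ^ (q - 1) * ∫⁻ x, w x * g x ^ q ∂μ := by
      rw [mul_rpow_of_nonneg _ _ hq_pos.le, ← ENNReal.rpow_mul, ← ENNReal.rpow_mul,
        one_div_mul_cancel hq_pos.ne', ENNReal.rpow_one, sub_mul, one_mul,
        one_div_mul_cancel hq_pos.ne', mul_comm]

end Measure

section Convolution

variable {G : Type*} [AddGroup G] [MeasurableSpace G] [MeasurableAdd₂ G] [MeasurableNeg G]
  {μ : Measure G} [SFinite μ] [μ.IsAddLeftInvariant] {w g : G → ℝ≥0∞}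

lemma lintegral_lconvolution (hw : AEMeasurable w μ) (hg : AEMeasurable g μ) :
    ∫⁻ x, (w ⋆ₗ[μ] g) x ∂μ = (∫⁻ z, w z ∂μ) * ∫⁻ x, g x ∂μ :=
  calc ∫⁻ x, ∫⁻ z, w z * g (-z + x) ∂μ ∂μ
      = ∫⁻ z, ∫⁻ x, w z * g (-z + x) ∂μ ∂μ := lintegral_lintegral_swap (by fun_prop)
    _ = ∫⁻ z, w z * ∫⁻ x, g x ∂μ ∂μ := by
        refine lintegral_congr fun z ↦ ?_
        have hg_translate : AEMeasurable (fun x ↦ g (-z + x)) μ :=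
          hg.comp_quasiMeasurePreserving (measurePreserving_add_left μ (-z)).quasiMeasurePreserving
        rw [lintegral_const_mul'' _ hg_translate, lintegral_add_left_eq_self]
    _ = _ := lintegral_mul_const'' _ hw

lemma lintegral_lconvolution_rpow_le (hw : AEMeasurable w μ) (hg : AEMeasurable g μ) {q : ℝ}
    (hq : 1 ≤ q) :
    ∫⁻ x, (w ⋆ₗ[μ] g) x ^ q ∂μ ≤ (∫⁻ z, w z ∂μ) ^ q * ∫⁻ x, g x ^ q ∂μ :=
  calc ∫⁻ x, (w ⋆ₗ[μ] g) x ^ q ∂μ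
      ≤ ∫⁻ x, (∫⁻ z, w z ∂μ) ^ (q - 1) * (w ⋆ₗ[μ] fun y ↦ g y ^ q) x ∂μ :=
        lintegral_mono fun x ↦ lintegral_mul_rpow_le hw (by fun_prop) hq
    _ = (∫⁻ z, w z ∂μ) ^ (q - 1) * ((∫⁻ z, w z ∂μ) ^ (1 : ℝ) * ∫⁻ x, g x ^ q ∂μ) := by
        rw [lintegral_const_mul'' _ (by fun_prop), lintegral_lconvolution hw (by fun_prop),
          ENNReal.rpow_one]
    _ = (∫⁻ z, w z ∂μ) ^ q * ∫⁻ x, g x ^ q ∂μ := by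
        rw [← mul_assoc, ← ENNReal.rpow_add_of_nonneg _ _ (by linarith) zero_le_one,
          sub_add_cancel]

lemma lconvolution_le_lintegral_mul_eLpNorm_top (hw : AEMeasurable w μ) (g : G → ℝ≥0∞) (x : G) :
    (w ⋆ₗ[μ] g) x ≤ (∫⁻ z, w z ∂μ) * eLpNorm g ⊤ μ := by
  have hφ : Measure.QuasiMeasurePreserving (fun z : G ↦ -z + x) μ μ :=
    (quasiMeasurePreserving_add_right μ x).comp (quasiMeasurePreserving_neg μ)
  calc (w ⋆ₗ[μ] g) x
      ≤ (∫⁻ z, w z ∂μ) * eLpNorm (fun z ↦ g (-z + x)) ⊤ μ :=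
        lintegral_mul_le_lintegral_mul_eLpNorm_top _ _ hw
    _ ≤ (∫⁻ z, w z ∂μ) * eLpNorm g ⊤ μ := by
        gcongr
        exact essSup_le_of_ae_le _ (hφ.ae (enorm_ae_le_eLpNormEssSup g μ))

lemma eLpNorm_lconvolution_le (hw : AEMeasurable w μ) (hg : AEMeasurable g μ) {p : ℝ≥0∞}
    (hp : 1 ≤ p) : eLpNorm (w ⋆ₗ[μ] g) p μ ≤ (∫⁻ z, w z ∂μ) * eLpNorm g p μ := by
  rcases eq_or_ne p ⊤ with rfl | hp_top
  · exact essSup_le_of_ae_le _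
      (ae_of_all _ (lconvolution_le_lintegral_mul_eLpNorm_top hw g))
  have hq : 1 ≤ p.toReal := by simpa using toReal_mono hp_top hp
  have hq_pos : 0 < p.toReal := one_pos.trans_le hq
  simp only [eLpNorm_eq_lintegral_rpow_enorm_toReal (one_pos.trans_le hp).ne' hp_top,
    enorm_eq_self]
  calc (∫⁻ x, (w ⋆ₗ[μ] g) x ^ p.toReal ∂μ) ^ (1 / p.toReal)
      ≤ ((∫⁻ z, w z ∂μ) ^ p.toReal * ∫⁻ x, g x ^ p.toReal ∂μ) ^ (1 / p.toReal) := by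
        gcongr
        exact lintegral_lconvolution_rpow_le hw hg hq
    _ = (∫⁻ z, w z ∂μ) * (∫⁻ x, g x ^ p.toReal ∂μ) ^ (1 / p.toReal) := by
        rw [mul_rpow_of_nonneg _ _ (by positivity), ← ENNReal.rpow_mul,
          mul_one_div_cancel hq_pos.ne', ENNReal.rpow_one]

end Convolution

lemma rpow_le_rpow_abs_mul_rpow {x y c : ℝ} (r : ℝ) (hx : 0 < x) (hxy : x ≤ y)
    (hyx : y ≤ c * x) : x ^ r ≤ c ^ |r| * y ^ r := by
  have hc : 1 ≤ c := le_of_mul_le_mul_right (by linarith) hx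
  have hy : 0 < y := hx.trans_le hxy
  rcases le_total 0 r with hr | hr
  · calc x ^ r ≤ y ^ r := by gcongr
      _ ≤ c ^ |r| * y ^ r :=
        le_mul_of_one_le_left (by positivity) (Real.one_le_rpow hc (abs_nonneg r))
  · calc x ^ r = c ^ |r| * (c * x) ^ r := by
          rw [Real.mul_rpow (by positivity) hx.le, ← mul_assoc, ← Real.rpow_add (by positivity),
            abs_of_nonpos hr, neg_add_cancel, Real.rpow_zero, one_mul]
      _ ≤ c ^ |r| * y ^ r := by
          gcongr ?_ * ?_
          exact Real.rpow_le_rpow_of_nonpos hy hyx hr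

lemma rpow_neg_mul_rpow_neg_le {t u κ σ : ℝ} (a b : ℝ) (hκ : 0 < κ) (hσ : 0 ≤ σ) (ht : 1 ≤ t)
    (htu : κ * t ≤ u) :
    t ^ (-a) * u ^ (-b) ≤ (2 ^ |(-(a + σ))| * (1 + κ⁻¹) ^ |(-(b - σ))| * κ⁻¹ ^ σ) *
      ((1 + t) ^ (-(a + σ)) * (1 + u) ^ (-(b - σ))) := by
  have ht_pos : 0 < t := one_pos.trans_le ht
  have hu_pos : 0 < u := (mul_pos hκ ht_pos).trans_le htu
  have htu' : t ≤ κ⁻¹ * u := (le_inv_mul_iff₀ hκ).2 htu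
  have transfer : t ^ σ * u ^ (-σ) ≤ κ⁻¹ ^ σ := by
    rw [Real.rpow_neg hu_pos.le, ← div_eq_mul_inv, div_le_iff₀ (by positivity),
      ← Real.mul_rpow (by positivity) hu_pos.le]
    gcongr
  calc t ^ (-a) * u ^ (-b)
      = t ^ (-(a + σ)) * u ^ (-(b - σ)) * (t ^ σ * u ^ (-σ)) := by
        rw [mul_mul_mul_comm, ← Real.rpow_add ht_pos, ← Real.rpow_add hu_pos]
        ring_nf
    _ ≤ (2 ^ |(-(a + σ))| * (1 + t) ^ (-(a + σ))) *
          ((1 + κ⁻¹) ^ |(-(b - σ))| * (1 + u) ^ (-(b - σ))) * κ⁻¹ ^ σ := by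
        gcongr
        · exact rpow_le_rpow_abs_mul_rpow _ ht_pos (by linarith) (by linarith)
        · exact rpow_le_rpow_abs_mul_rpow _ hu_pos (by linarith) (by linarith)
    _ = _ := by ring

section Decay

variable {E : Type*} [NormedAddCommGroup E]

/-- The weight `(1 + ‖v‖)^{-r}`, used in place of `⟨v⟩^{-r}`, to which it is comparable. It takes
values in `ℝ≥0∞` so that no integrability has to be tracked in integrals against it. -/
noncomputable def decay (r : ℝ) (v : E) : ℝ≥0∞ :=
  ENNReal.ofReal ((1 + ‖v‖) ^ (-r))

/-- The kernel `∫∫ w₁(z₁) w₂(z₂) 𝟙_{|z₂ - y| ≥ κ|x - z₁|, |x - z₁| ≥ 1} |x - z₁|^{-a} |z₂ - y|^{-b}`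
of the regime `r₂ ≫ r₁ ≫ 1`, where `r₁ = |x - z₁|` and `r₂ = |z₂ - y|`. The weights `w₁`, `w₂` and
the ratio `κ` are arbitrary. -/
noncomputable def farRegimeKernel [MeasurableSpace E] (μ : Measure E) (w₁ w₂ : E → ℝ≥0∞)
    (κ a b : ℝ) (x y : E) : ℝ≥0∞ :=
  ∫⁻ z₁, ∫⁻ z₂, w₁ z₁ * w₂ z₂ *
    (if κ * ‖x - z₁‖ ≤ ‖z₂ - y‖ ∧ 1 ≤ ‖x - z₁‖ then 1 else 0) *
    ENNReal.ofReal (‖x - z₁‖ ^ (-a)) * ENNReal.ofReal (‖z₂ - y‖ ^ (-b)) ∂μ ∂μ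

lemma decay_sub_comm (r : ℝ) (u v : E) : decay r (u - v) = decay r (v - u) := by
  rw [decay, decay, norm_sub_rev]

lemma decay_rpow (r : ℝ) (v : E) {q : ℝ} (hq : 0 ≤ q) : decay r v ^ q = decay (r * q) v := by
  rw [decay, decay, ofReal_rpow_of_nonneg (by positivity) hq, ← Real.rpow_mul (by positivity),
    neg_mul]

lemma decay_le_one {r : ℝ} (hr : 0 ≤ r) (v : E) : decay r v ≤ 1 :=
  ofReal_le_one.2 (Real.rpow_le_one_of_one_le_of_nonpos (le_add_of_nonneg_right (norm_nonneg v))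
    (neg_nonpos.2 hr))

lemma rpow_neg_mul_rpow_neg_le_decay_mul_decay {κ σ : ℝ} (a b : ℝ) (hκ : 0 < κ) (hσ : 0 ≤ σ) :
    ∃ C : ℝ≥0∞, C ≠ ⊤ ∧ ∀ u v : E, κ * ‖u‖ ≤ ‖v‖ → 1 ≤ ‖u‖ →
      ENNReal.ofReal (‖u‖ ^ (-a)) * ENNReal.ofReal (‖v‖ ^ (-b)) ≤
        C * (decay (a + σ) u * decay (b - σ) v) := by
  refine ⟨ENNReal.ofReal (2 ^ |(-(a + σ))| * (1 + κ⁻¹) ^ |(-(b - σ))| * κ⁻¹ ^ σ),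
    ofReal_ne_top, fun u v huv hu ↦ ?_⟩
  rw [decay, decay, ← ofReal_mul (by positivity), ← ofReal_mul (by positivity),
    ← ofReal_mul (by positivity)]
  exact ofReal_le_ofReal (rpow_neg_mul_rpow_neg_le a b hκ hσ hu huv)

variable [MeasurableSpace E] [BorelSpace E]

@[fun_prop]
lemma measurable_decay (r : ℝ) : Measurable (decay r : E → ℝ≥0∞) := by
  unfold decay
  fun_prop

lemma farRegimeKernel_le {μ : Measure E} {w₁ w₂ : E → ℝ≥0∞} (hw₁ : AEMeasurable w₁ μ)
    (hw₂ : AEMeasurable w₂ μ) {κ σ : ℝ} (a b : ℝ) (hκ : 0 < κ) (hσ : 0 ≤ σ) :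
    ∃ C : ℝ≥0∞, C ≠ ⊤ ∧ ∀ x y, farRegimeKernel μ w₁ w₂ κ a b x y ≤
      C * (w₁ ⋆ₗ[μ] decay (a + σ)) x * (w₂ ⋆ₗ[μ] decay (b - σ)) y := by
  obtain ⟨C, hC, hle⟩ := rpow_neg_mul_rpow_neg_le_decay_mul_decay (E := E) a b hκ hσ
  refine ⟨C, hC, fun x y ↦ ?_⟩
  have integrand_le (z₁ z₂ : E) : w₁ z₁ * w₂ z₂ *
      (if κ * ‖x - z₁‖ ≤ ‖z₂ - y‖ ∧ 1 ≤ ‖x - z₁‖ then 1 else 0) *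
      ENNReal.ofReal (‖x - z₁‖ ^ (-a)) * ENNReal.ofReal (‖z₂ - y‖ ^ (-b)) ≤
      C * (w₁ z₁ * decay (a + σ) (-z₁ + x)) * (w₂ z₂ * decay (b - σ) (-z₂ + y)) := by
    split_ifs with h
    · calc w₁ z₁ * w₂ z₂ * 1 * ENNReal.ofReal (‖x - z₁‖ ^ (-a)) *
            ENNReal.ofReal (‖z₂ - y‖ ^ (-b))
          = w₁ z₁ * w₂ z₂ *
              (ENNReal.ofReal (‖x - z₁‖ ^ (-a)) * ENNReal.ofReal (‖z₂ - y‖ ^ (-b))) := by ring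
        _ ≤ w₁ z₁ * w₂ z₂ * (C * (decay (a + σ) (x - z₁) * decay (b - σ) (z₂ - y))) := by
          gcongr w₁ z₁ * w₂ z₂ * ?_
          exact hle _ _ h.1 h.2
        _ = C * (w₁ z₁ * decay (a + σ) (-z₁ + x)) * (w₂ z₂ * decay (b - σ) (-z₂ + y)) := by
          rw [neg_add_eq_sub, neg_add_eq_sub, decay_sub_comm _ z₂ y]
          ring
    · simp
  calc farRegimeKernel μ w₁ w₂ κ a b x y
      ≤ ∫⁻ z₁, ∫⁻ z₂, C * (w₁ z₁ * decay (a + σ) (-z₁ + x)) *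
          (w₂ z₂ * decay (b - σ) (-z₂ + y)) ∂μ ∂μ :=
        lintegral_mono fun z₁ ↦ lintegral_mono (integrand_le z₁)
    _ = ∫⁻ z₁, C * (w₁ z₁ * decay (a + σ) (-z₁ + x)) * (w₂ ⋆ₗ[μ] decay (b - σ)) y ∂μ :=
        lintegral_congr fun z₁ ↦ lintegral_const_mul'' _ (by fun_prop)
    _ = C * (w₁ ⋆ₗ[μ] decay (a + σ)) x * (w₂ ⋆ₗ[μ] decay (b - σ)) y := by
        rw [lintegral_mul_const'' _ (by fun_prop), lintegral_const_mul'' _ (by fun_prop)]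
        rfl

variable [NormedSpace ℝ E] [FiniteDimensional ℝ E] (μ : Measure E) [μ.IsAddHaarMeasure]

lemma eLpNorm_decay_lt_top {r : ℝ} {p : ℝ≥0∞} (hr : Module.finrank ℝ E * p⁻¹.toReal < r) :
    eLpNorm (decay r : E → ℝ≥0∞) p μ < ⊤ := by
  rcases eq_or_ne p 0 with rfl | hp_zero
  · simp
  rcases eq_or_ne p ⊤ with rfl | hp_top
  · have hr_nonneg : 0 ≤ r := by simpa using hr.le
    exact (essSup_le_of_ae_le 1 (ae_of_all μ (decay_le_one hr_nonneg))).trans_lt one_lt_top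
  · have hp_pos : 0 < p.toReal := toReal_pos hp_zero hp_top
    have hrp : Module.finrank ℝ E < r * p.toReal := by
      rwa [toReal_inv, ← div_eq_mul_inv, div_lt_iff₀ hp_pos] at hr
    rw [eLpNorm_lt_top_iff_lintegral_rpow_enorm_lt_top hp_zero hp_top]
    simp only [enorm_eq_self, decay_rpow r _ hp_pos.le]
    exact finite_integral_one_add_norm hrp

lemma eLpNorm_lconvolution_decay_ne_top {w : E → ℝ≥0∞} (hw : AEMeasurable w μ)
    (hw_int : ∫⁻ z, w z ∂μ ≠ ⊤) {r : ℝ} {p : ℝ≥0∞} (hp : 1 ≤ p)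
    (hr : Module.finrank ℝ E * p⁻¹.toReal < r) : eLpNorm (w ⋆ₗ[μ] decay r) p μ ≠ ⊤ :=
  ne_top_of_le_ne_top (mul_ne_top hw_int (eLpNorm_decay_lt_top μ hr).ne)
    (eLpNorm_lconvolution_le hw (measurable_decay r).aemeasurable hp)

lemma lintegral_sqrt_one_add_norm_sq_rpow_lt_top {r : ℝ} (hr : Module.finrank ℝ E < r) :
    ∫⁻ z : E, ENNReal.ofReal (√(1 + ‖z‖ ^ 2) ^ (-r)) ∂μ < ⊤ := by
  simpa only [← Real.rpow_div_two_eq_sqrt _ (add_nonneg zero_le_one (sq_nonneg _))] using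
    (integrable_rpow_neg_one_add_norm_sq hr).lintegral_lt_top

theorem stmt_17_general {w₁ w₂ : E → ℝ≥0∞} (hw₁ : AEMeasurable w₁ μ) (hw₂ : AEMeasurable w₂ μ)
    (hw₁_int : ∫⁻ z, w₁ z ∂μ ≠ ⊤) (hw₂_int : ∫⁻ z, w₂ z ∂μ ≠ ⊤) {κ a b : ℝ} (hκ : 0 < κ)
    (hab : Module.finrank ℝ E < a + b) {p : ℝ≥0∞} (hp : 1 ≤ p)
    (hpb : Module.finrank ℝ E - b < Module.finrank ℝ E * p⁻¹.toReal) :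
    ∃ C : ℝ≥0∞, C ≠ ⊤ ∧ ∀ f : E → ℝ≥0∞, AEMeasurable f μ →
      eLpNorm (fun x ↦ ∫⁻ y, farRegimeKernel μ w₁ w₂ κ a b x y * f y ∂μ) p μ ≤
        C * eLpNorm f p μ := by
  set d : ℝ := (Module.finrank ℝ E : ℝ)
  have hpq : p.HolderConjugate p.conjExponent := .conjExponent hp
  set q := p.conjExponent
  have hpq_inv : p⁻¹.toReal + q⁻¹.toReal = 1 := by
    rw [← toReal_add (inv_ne_top.2 (HolderConjugate.ne_zero p q))
      (inv_ne_top.2 (HolderConjugate.ne_zero q p)), HolderConjugate.inv_add_inv_eq_one, toReal_one]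
  obtain ⟨σ, hσ, hσb⟩ : ∃ σ, max 0 (d * p⁻¹.toReal - a) < σ ∧ σ < b - d * q⁻¹.toReal := by
    refine exists_between (max_lt ?_ ?_)
    · linear_combination hpb + d * hpq_inv
    · linear_combination hab + d * hpq_inv
  obtain ⟨hσ_pos, hσa⟩ := max_lt_iff.1 hσ
  obtain ⟨C, hC, hle⟩ := farRegimeKernel_le hw₁ hw₂ a b hκ hσ_pos.le
  have hG := eLpNorm_lconvolution_decay_ne_top μ hw₁ hw₁_int hp (sub_lt_iff_lt_add'.1 hσa)
  have hH := eLpNorm_lconvolution_decay_ne_top μ hw₂ hw₂_int (HolderConjugate.one_le q p)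
    (lt_sub_comm.1 hσb)
  refine ⟨C * eLpNorm (w₁ ⋆ₗ[μ] decay (a + σ)) p μ * eLpNorm (w₂ ⋆ₗ[μ] decay (b - σ)) q μ,
    mul_ne_top (mul_ne_top hC hG) hH, fun f hf ↦ ?_⟩
  rw [← eLpNorm_const_mul_ennreal C (by fun_prop) (HolderConjugate.ne_zero p q)]
  exact eLpNorm_lintegral_mul_le_of_le_mul hpq hle (by fun_prop) (by fun_prop) hf

end Decay

/-- `L^p` boundedness, for `1 ≤ p < n/(n−η−1)`, of the positive integral operator with the
kernel arising in the regime `r₂ ≫ r₁ ≫ 1`. -/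
theorem stmt_17 (n m k₁ : ℕ) (hm : 1 ≤ m) (hn : 2 * m < n) (ε η : ℝ)
    (hε : 0 < ε) (hcond : 2 * (m : ℝ) < η + k₁ + 1)
    (hη1 : 0 < η + 1) (hη2 : η + 1 < n)
    (K : EuclideanSpace ℝ (Fin n) → EuclideanSpace ℝ (Fin n) → ℝ≥0∞)
    (hK : ∀ x y, K x y =
      ∫⁻ z₁, ∫⁻ z₂,
        ENNReal.ofReal (Real.sqrt (1 + ‖z₁‖ ^ 2) ^ (-(n : ℝ) - ε)) *
        ENNReal.ofReal (Real.sqrt (1 + ‖z₂‖ ^ 2) ^ (-(n : ℝ) - ε)) *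
        (if 2 * ‖x - z₁‖ ≤ ‖z₂ - y‖ ∧ 1 ≤ ‖x - z₁‖ then 1 else 0) *
        ENNReal.ofReal (‖x - z₁‖ ^ (-((n : ℝ) - 2 * m + k₁))) *
        ENNReal.ofReal (‖z₂ - y‖ ^ (-η - 1))) :
    ∀ p : ℝ, 1 ≤ p → p < (n : ℝ) / ((n : ℝ) - η - 1) →
      ∃ C : ℝ≥0∞, C ≠ ⊤ ∧ ∀ f : EuclideanSpace ℝ (Fin n) → ℝ≥0∞, AEMeasurable f →
        (∫⁻ x, (∫⁻ y, K x y * f y) ^ p) ^ (1 / p) ≤ C * (∫⁻ x, (f x) ^ p) ^ (1 / p) := by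
  intro p hp hp_lt
  have hp_pos : 0 < p := one_pos.trans_le hp
  have hweight : ∫⁻ z : EuclideanSpace ℝ (Fin n),
      ENNReal.ofReal (√(1 + ‖z‖ ^ 2) ^ (-(n : ℝ) - ε)) ≠ ⊤ := by
    rw [← neg_add']
    exact (lintegral_sqrt_one_add_norm_sq_rpow_lt_top volume (by simpa using hε)).ne
  have hpb : (n : ℝ) - (η + 1) < n * (ENNReal.ofReal p)⁻¹.toReal := by
    rw [toReal_inv, toReal_ofReal hp_pos.le, ← div_eq_mul_inv, lt_div_comm₀ (by linarith) hp_pos,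
      ← sub_sub]
    exact hp_lt
  obtain ⟨C, hC, bound⟩ := stmt_17_general (volume : Measure (EuclideanSpace ℝ (Fin n)))
    (by fun_prop) (by fun_prop) hweight hweight (κ := 2) (a := n - 2 * m + k₁) (b := η + 1) two_pos
    (by rw [finrank_euclideanSpace_fin]; linarith) (one_le_ofReal.2 hp)
    (by rwa [finrank_euclideanSpace_fin])
  refine ⟨C, hC, fun f hf ↦ ?_⟩
  simpa only [eLpNorm_ofReal_eq_lintegral_rpow _ hp_pos, farRegimeKernel, neg_add', hK]
    using bound f hf
end
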